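/- arXiv:2001.09236 — 3 statements merged into one kernel-verified Lean document; each statement's English description precedes it below -/
import Mathlib

section
/- For every s ∈ [ř, r̂] one has g(s) ≥ g(s_min); consequently the minimum of g over the interval [ř, r̂] is attained at s_min (the endpoint of [ř, r̂] farther from s*). This is the constrained lower-bound placement rule of Fact 3 (equations (17) and (19) of the paper). -/
open MeasureTheory

/-!
After translating the mode to `0`, `g s` is the integral of an even function `h` over the window
of half-width `(b - a) / 2` centred at `s* - s`. The window integral is itself even in the centre,
and moving the centre `d ≥ 0` outwards to `e` trades the mass of `h` on `[d - L, e - L]` for that on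
`[d + L, e + L]`, whose points are farther from `0`. So `g s` does not increase as `|s* - s|`
grows, and on an interval it is smallest at the endpoint farther from `s*`.
-/

theorem le_of_even_of_antitoneOn_of_abs_le {G β : Type*} [AddCommGroup G] [LinearOrder G]
    [IsOrderedAddMonoid G] [Preorder β] {h : G → β} (heven : h.Even)
    (hanti : AntitoneOn h (Set.Ici 0)) {x y : G} (hxy : |x| ≤ |y|) : h y ≤ h x := by
  have apply_abs (z : G) : h |z| = h z := by
    rcases abs_choice z with hz | hz <;> rw [hz]
    exact heven z
  rw [← apply_abs x, ← apply_abs y]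
  exact hanti (abs_nonneg x) (abs_nonneg y) hxy

theorem even_comp_add_left_of_symm {G β : Type*} [AddGroup G] {f : G → β} {c : G}
    (hsymm : ∀ t, f (c + t) = f (c - t)) : Function.Even fun x ↦ f (c + x) := fun t ↦ by
  simp only [hsymm t, sub_eq_add_neg]

theorem antitoneOn_comp_add_left_Ici_zero {G β : Type*} [AddCommMonoid G] [Preorder G]
    [IsOrderedAddMonoid G] [Preorder β] {f : G → β} {c : G} (hanti : AntitoneOn f (Set.Ici c)) :
    AntitoneOn (fun x ↦ f (c + x)) (Set.Ici 0) := fun _ hx _ hy hxy ↦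
  hanti (le_add_of_nonneg_right hx) (le_add_of_nonneg_right hy) (add_le_add_right hxy c)

theorem intervalIntegrable_of_even_of_antitoneOn {h : ℝ → ℝ} (heven : h.Even)
    (hanti : AntitoneOn h (Set.Ici 0)) (p q : ℝ) : IntervalIntegrable h volume p q :=
  intervalIntegrable_of_even (fun x ↦ (heven x).symm) fun x hx ↦
    (hanti.mono (Set.uIcc_of_le hx.le ▸ Set.Icc_subset_Ici_self)).intervalIntegrable

/-- The integral of `h` over the window of half-width `L` centred at `d`, as a function of the
centre `d`. It is an oriented integral, so it changes sign with `L`. -/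
noncomputable def windowIntegral {E : Type*} [NormedAddCommGroup E] [NormedSpace ℝ E]
    (h : ℝ → E) (L d : ℝ) : E :=
  ∫ x in (d - L)..(d + L), h x

namespace windowIntegral

variable {E : Type*} [NormedAddCommGroup E] [NormedSpace ℝ E]

theorem even {h : ℝ → E} (heven : h.Even) (L : ℝ) : (windowIntegral h L).Even := fun d ↦ by
  calc ∫ x in (-d - L)..(-d + L), h x
      = ∫ x in (-(d + L))..(-(d - L)), h x := by congr 1 <;> ring
    _ = ∫ x in (d - L)..(d + L), h (-x) := (intervalIntegral.integral_comp_neg h).symm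
    _ = ∫ x in (d - L)..(d + L), h x := by simp only [heven.eq]

theorem antitoneOn {h : ℝ → ℝ} (heven : h.Even) (hanti : AntitoneOn h (Set.Ici 0)) {L : ℝ}
    (hL : 0 ≤ L) : AntitoneOn (windowIntegral h L) (Set.Ici 0) := by
  intro d hd e _ hde
  have hint := intervalIntegrable_of_even_of_antitoneOn heven hanti
  have lost_ge_gained : ∫ x in (d + L)..(e + L), h x ≤ ∫ x in (d - L)..(e - L), h x := by
    rw [← intervalIntegral.integral_comp_add_right h L,
      ← intervalIntegral.integral_comp_sub_right h L]
    refine intervalIntegral.integral_mono_on hde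
      (by simpa using (hint (d + L) (e + L)).comp_add_right L)
      (by simpa using (hint (d - L) (e - L)).comp_sub_right L) fun x hx ↦ ?_
    have hx_nonneg : 0 ≤ x := le_trans hd hx.1
    refine le_of_even_of_antitoneOn_of_abs_le heven hanti ?_
    rw [abs_of_nonneg (add_nonneg hx_nonneg hL), abs_le]
    constructor <;> linarith
  rw [← sub_nonneg, windowIntegral, windowIntegral,
    intervalIntegral.integral_interval_sub_interval_comm (hint _ _) (hint _ _) (hint _ _)]
  exact sub_nonneg.2 lost_ge_gained

theorem le_of_abs_le {h : ℝ → ℝ} (heven : h.Even) (hanti : AntitoneOn h (Set.Ici 0)) {L : ℝ}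
    (hL : 0 ≤ L) {d e : ℝ} (hde : |d| ≤ |e|) : windowIntegral h L e ≤ windowIntegral h L d :=
  le_of_even_of_antitoneOn_of_abs_le (even heven L) (antitoneOn heven hanti hL) hde

end windowIntegral

theorem integral_comp_sub_right_eq_windowIntegral {E : Type*} [NormedAddCommGroup E]
    [NormedSpace ℝ E] (f : ℝ → E) (c a b s : ℝ) :
    ∫ x in a..b, f (x - s) =
      windowIntegral (fun x ↦ f (c + x)) ((b - a) / 2) ((a + b) / 2 - c - s) := by
  rw [windowIntegral, intervalIntegral.integral_comp_sub_right f s,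
    intervalIntegral.integral_comp_add_left f c]
  congr 1 <;> ring

theorem integral_comp_sub_right_le_of_abs_le {f : ℝ → ℝ} {c a b : ℝ}
    (hsymm : ∀ t, f (c + t) = f (c - t)) (hanti : AntitoneOn f (Set.Ici c)) (hab : a ≤ b)
    {s t : ℝ} (hst : |(a + b) / 2 - c - s| ≤ |(a + b) / 2 - c - t|) :
    ∫ x in a..b, f (x - t) ≤ ∫ x in a..b, f (x - s) := by
  simp only [integral_comp_sub_right_eq_windowIntegral f c]
  exact windowIntegral.le_of_abs_le (even_comp_add_left_of_symm hsymm)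
    (antitoneOn_comp_add_left_Ici_zero hanti) (div_nonneg (sub_nonneg.2 hab) zero_le_two) hst

theorem ite_mem_Icc_eq_max_min {α : Type*} [LinearOrder α] {lo hi : α} (hle : lo ≤ hi) (m : α) :
    (if lo ≤ m ∧ m ≤ hi then m else if hi < m then hi else lo) = max lo (min hi m) := by
  grind

/-- The endpoint of `[lo, hi]` farther from `m`; a tie is resolved in favour of `hi`. -/
def farthestEndpoint {K : Type*} [Field K] [LinearOrder K] (lo hi m : K) : K :=
  if (lo + hi) / 2 < m then lo else hi

namespace farthestEndpoint

variable {K : Type*} [Field K] [LinearOrder K]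

theorem mem_Icc {lo hi : K} (hle : lo ≤ hi) (m : K) :
    farthestEndpoint lo hi m ∈ Set.Icc lo hi := by
  unfold farthestEndpoint
  split_ifs
  exacts [Set.left_mem_Icc.2 hle, Set.right_mem_Icc.2 hle]

variable [IsStrictOrderedRing K]

theorem clamp_eq {lo hi : K} (hle : lo ≤ hi) (m : K) :
    farthestEndpoint lo hi (max lo (min hi m)) = farthestEndpoint lo hi m := by
  rcases hle.eq_or_lt with rfl | hlt
  · simp only [farthestEndpoint, ite_self]
  · have lo_le_mid : lo ≤ (lo + hi) / 2 := (left_lt_add_div_two.2 hlt).le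
    have mid_lt_hi : (lo + hi) / 2 < hi := add_div_two_lt_right.2 hlt
    simp only [farthestEndpoint, lt_max_iff, lt_min_iff, lo_le_mid.not_gt, mid_lt_hi, false_or,
      true_and]

theorem abs_sub_le {lo hi s : K} (hs : s ∈ Set.Icc lo hi) (m : K) :
    |m - s| ≤ |m - farthestEndpoint lo hi m| := by
  obtain ⟨lo_le_s, s_le_hi⟩ := hs
  unfold farthestEndpoint
  split_ifs with hmid
  · rw [abs_of_nonneg (a := m - lo) (by linarith), abs_le]
    constructor <;> linarith
  · rw [abs_of_nonpos (a := m - hi) (by linarith), abs_le]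
    constructor <;> linarith

end farthestEndpoint

theorem g_min_on_interval_general
    (f : ℝ → ℝ) (c a b : ℝ)
    (hf_symm : ∀ t, f (c + t) = f (c - t))
    (hf_anti : AntitoneOn f (Set.Ici c))
    (hab : a ≤ b)
    (g : ℝ → ℝ) (hg : ∀ s, g s = ∫ x in a..b, f (x - s))
    (sstar : ℝ) (hsstar : sstar = (a + b) / 2 - c)
    (rlo rhi : ℝ) (hr : rlo ≤ rhi)
    (smax : ℝ)
    (hsmax : smax = if rlo ≤ sstar ∧ sstar ≤ rhi then sstar
      else if rhi < sstar then rhi else rlo)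
    (smin : ℝ)
    (hsmin : smin = if (rlo + rhi) / 2 < smax then rlo else rhi) :
    smin ∈ Set.Icc rlo rhi ∧ ∀ s ∈ Set.Icc rlo rhi, g smin ≤ g s := by
  have smin_eq : smin = farthestEndpoint rlo rhi sstar := by
    rw [← farthestEndpoint.clamp_eq hr, ← ite_mem_Icc_eq_max_min hr, ← hsmax, hsmin,
      farthestEndpoint]
  rw [smin_eq]
  refine ⟨farthestEndpoint.mem_Icc hr sstar, fun s hs ↦ ?_⟩
  rw [hg, hg]
  refine integral_comp_sub_right_le_of_abs_le hf_symm hf_anti hab ?_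
  rw [← hsstar]
  exact farthestEndpoint.abs_sub_le hs sstar

/-- Constrained lower-bound placement rule (Fact 3, eqs. (17) and (19)):
the minimum of `g` over `[ř, r̂]` is attained at `s_min`, the endpoint of
`[ř, r̂]` farther from `s* = (a+b)/2 - c`. -/
theorem g_min_on_interval
    (f : ℝ → ℝ) (c a b : ℝ)
    (hf_nonneg : ∀ x, 0 ≤ f x)
    (hf_int : Integrable f)
    (hf_symm : ∀ t, f (c + t) = f (c - t))
    (hf_mono : MonotoneOn f (Set.Iic c))
    (hf_anti : AntitoneOn f (Set.Ici c))
    (hab : a < b)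
    (g : ℝ → ℝ) (hg : ∀ s, g s = ∫ x in a..b, f (x - s))
    (sstar : ℝ) (hsstar : sstar = (a + b) / 2 - c)
    (rlo rhi : ℝ) (hr : rlo ≤ rhi)
    (smax : ℝ)
    (hsmax : smax = if rlo ≤ sstar ∧ sstar ≤ rhi then sstar
      else if rhi < sstar then rhi else rlo)
    (smin : ℝ)
    (hsmin : smin = if (rlo + rhi) / 2 < smax then rlo else rhi) :
    smin ∈ Set.Icc rlo rhi ∧ ∀ s ∈ Set.Icc rlo rhi, g smin ≤ g s := by
  exact g_min_on_interval_general f c a b hf_symm hf_anti hab.le g hg sstar hsstar rlo rhi hr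
    smax hsmax smin hsmin
end

section
/- For every s ∈ ∏_{i=1}^n [ř_i + u_i, r̂_i + u_i] one has μ({y ∈ ℝⁿ : s + y ∈ ∏_{i=1}^n [a_i, b_i]}) ≤ ∏_{i=1}^n g_i(s_{i,max}); moreover the point (s_{1,max}, …, s_{n,max}) belongs to ∏_{i=1}^n [ř_i + u_i, r̂_i + u_i] and attains equality, so the supremum of the landing probability over this rectangle of positions equals ∏_{i=1}^n g_i(s_{i,max}). (This is the upper transition-probability bound of Fact 3 of the paper.) -/
open MeasureTheory

/-
By independence the landing probability factors into one-dimensional masses `g_i(s_i)`. Moving the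
start from `t` to `s` trades the mass of one end of the window `[a - t, b - t]` for that of a
translate at the other end, and for a symmetric unimodal density the end closer to the centre is
heavier. Hence `g_i` is itself symmetric and unimodal, about `s*_i`, so on an interval of starts it
is largest at the point nearest to `s*_i`, which is the projection `s_{i,max}` of `s*_i` onto it.
-/

section SymmUnimodal

variable {G β : Type*} [AddCommGroup G] [LinearOrder G] [Preorder β] {f : G → β} {c : G}

/-- Symmetry about `c` together with unimodality with mode `c`. Monotonicity to the left of `c` is
not a field, since symmetry carries it over from the right. -/
structure IsSymmUnimodal (f : G → β) (c : G) : Prop where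
  symm : ∀ t, f (c + t) = f (c - t)
  antitoneOn : AntitoneOn f (Set.Ici c)

namespace IsSymmUnimodal

theorem apply_eq_apply_add_abs_sub (hf : IsSymmUnimodal f c) (x : G) : f x = f (c + |x - c|) := by
  rcases abs_choice (x - c) with h | h
  · rw [h, add_sub_cancel]
  · rw [h, hf.symm, sub_neg_eq_add, add_sub_cancel]

variable [IsOrderedAddMonoid G]

theorem le_of_abs_sub_le_abs_sub (hf : IsSymmUnimodal f c) {x y : G} (h : |x - c| ≤ |y - c|) :
    f y ≤ f x := by
  rw [hf.apply_eq_apply_add_abs_sub x, hf.apply_eq_apply_add_abs_sub y]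
  exact hf.antitoneOn (le_add_of_nonneg_right (abs_nonneg _))
    (le_add_of_nonneg_right (abs_nonneg _)) (by gcongr)

theorem monotoneOn (hf : IsSymmUnimodal f c) : MonotoneOn f (Set.Iic c) := by
  intro x hx y hy hxy
  apply hf.le_of_abs_sub_le_abs_sub
  rw [abs_sub_comm y, abs_sub_comm x, abs_of_nonneg (sub_nonneg.2 hy),
    abs_of_nonneg (sub_nonneg.2 hx)]
  gcongr

end IsSymmUnimodal

end SymmUnimodal

section Projection

variable {α : Type*} [LinearOrder α] {lo hi : α}

theorem ite_eq_coe_projIcc (h : lo ≤ hi) (p : α) :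
    (if lo ≤ p ∧ p ≤ hi then p else if hi < p then hi else lo) = Set.projIcc lo hi h p := by
  rw [Set.coe_projIcc]
  grind

theorem abs_projIcc_sub_le [AddCommGroup α] [IsOrderedAddMonoid α] (h : lo ≤ hi) {x : α}
    (hx : x ∈ Set.Icc lo hi) (p : α) : |(Set.projIcc lo hi h p : α) - p| ≤ |x - p| := by
  rcases le_total p lo with hp | hp
  · rw [Set.projIcc_of_le_left h hp, abs_of_nonneg (sub_nonneg.2 hp)]
    exact (sub_le_sub_right hx.1 p).trans (le_abs_self _)
  rcases le_total p hi with hp' | hp'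
  · rw [Set.projIcc_of_mem h ⟨hp, hp'⟩, sub_self, abs_zero]
    exact abs_nonneg _
  · rw [Set.projIcc_of_right_le h hp', abs_sub_comm, abs_sub_comm x,
      abs_of_nonneg (sub_nonneg.2 hp')]
    exact (sub_le_sub_left hx.2 p).trans (le_abs_self _)

end Projection

section LandingMass

variable {f : ℝ → ℝ} {a b c : ℝ}

/-- The mass that a density `f`, translated by the starting point `s`, puts on the target `[a, b]`.
It is the paper's `g_i(s)`; `f` need not be normalized. -/
noncomputable def landingMass (f : ℝ → ℝ) (a b s : ℝ) : ℝ :=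
  ∫ x in a..b, f (x - s)

theorem landingMass_nonneg (hf : ∀ x, 0 ≤ f x) (hab : a ≤ b) (s : ℝ) : 0 ≤ landingMass f a b s :=
  intervalIntegral.integral_nonneg hab fun _ _ => hf _

theorem landingMass_eq_integral (f : ℝ → ℝ) (a b s : ℝ) :
    landingMass f a b s = ∫ x in (a - s)..(b - s), f x :=
  intervalIntegral.integral_comp_sub_right f s

theorem landingMass_sub_landingMass (hf : ∀ p q, IntervalIntegrable f volume p q) (a b s t : ℝ) :
    landingMass f a b s - landingMass f a b t =
      (∫ x in (a - t)..(a - s), f (x + (b - a))) - ∫ x in (a - t)..(a - s), f x := by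
  rw [landingMass_eq_integral, landingMass_eq_integral,
    intervalIntegral.integral_interval_sub_interval_comm' (hf _ _) (hf _ _) (hf _ _),
    intervalIntegral.integral_comp_add_right]
  congr 2 <;> ring

namespace IsSymmUnimodal

theorem intervalIntegrable (hf : IsSymmUnimodal f c) (p q : ℝ) :
    IntervalIntegrable f volume p q := by
  have from_center (r : ℝ) : IntervalIntegrable f volume c r := by
    rcases le_total c r with hr | hr
    · refine (hf.antitoneOn.mono ?_).intervalIntegrable
      exact (Set.uIcc_of_le hr).trans_subset Set.Icc_subset_Ici_self
    · refine (hf.monotoneOn.mono ?_).intervalIntegrable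
      exact (Set.uIcc_of_ge hr).trans_subset Set.Icc_subset_Iic_self
  exact (from_center p).symm.trans (from_center q)

theorem landingMass_symm (hf : IsSymmUnimodal f c) (a b t : ℝ) :
    landingMass f a b ((a + b) / 2 - c + t) = landingMass f a b ((a + b) / 2 - c - t) := by
  have reflect (x : ℝ) :
      f (x - ((a + b) / 2 - c + t)) = f (a + b - x - ((a + b) / 2 - c - t)) := by
    convert hf.symm (x - (a + b) / 2 - t) using 2 <;> ring
  calc landingMass f a b ((a + b) / 2 - c + t)
      = ∫ x in a..b, f (a + b - x - ((a + b) / 2 - c - t)) :=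
        intervalIntegral.integral_congr fun x _ => reflect x
    _ = landingMass f a b ((a + b) / 2 - c - t) := by
        rw [intervalIntegral.integral_comp_sub_left fun y => f (y - ((a + b) / 2 - c - t)),
          add_sub_cancel_right, add_sub_cancel_left, landingMass]

theorem landingMass_antitoneOn (hf : IsSymmUnimodal f c) (hab : a ≤ b) :
    AntitoneOn (landingMass f a b) (Set.Ici ((a + b) / 2 - c)) := by
  intro s hs t _ hst
  have right_end_closer {x : ℝ} (hx : x ≤ a - s) : |x + (b - a) - c| ≤ |x - c| := by
    have center_le : (a + b) / 2 - c ≤ s := hs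
    rw [abs_of_nonpos (by linarith : x - c ≤ 0), abs_le]
    constructor <;> linarith
  rw [← sub_nonneg, landingMass_sub_landingMass hf.intervalIntegrable, sub_nonneg]
  exact intervalIntegral.integral_mono_on (sub_le_sub_left hst a) (hf.intervalIntegrable _ _)
    ((IntervalIntegrable.comp_add_right_iff ENNReal.coe_ne_top).2 (hf.intervalIntegrable _ _))
    fun x hx => hf.le_of_abs_sub_le_abs_sub (right_end_closer hx.2)

theorem isSymmUnimodal_landingMass (hf : IsSymmUnimodal f c) (hab : a ≤ b) :
    IsSymmUnimodal (landingMass f a b) ((a + b) / 2 - c) :=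
  ⟨hf.landingMass_symm a b, hf.landingMass_antitoneOn hab⟩

theorem landingMass_le_projIcc (hf : IsSymmUnimodal f c) (hab : a ≤ b) {lo hi s : ℝ}
    (h : lo ≤ hi) (hs : s ∈ Set.Icc lo hi) :
    landingMass f a b s ≤ landingMass f a b (Set.projIcc lo hi h ((a + b) / 2 - c)) :=
  (hf.isSymmUnimodal_landingMass hab).le_of_abs_sub_le_abs_sub (abs_projIcc_sub_le h hs _)

end IsSymmUnimodal

theorem withDensity_ofReal_Icc (hf : ∀ x, 0 ≤ f x) (hab : a ≤ b)
    (hfi : IntervalIntegrable f volume a b) :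
    volume.withDensity (fun x => ENNReal.ofReal (f x)) (Set.Icc a b) =
      ENNReal.ofReal (∫ x in a..b, f x) := by
  rw [withDensity_apply _ measurableSet_Icc, intervalIntegral.integral_of_le hab,
    ← integral_Icc_eq_integral_Ioc, ofReal_integral_eq_lintegral_ofReal
      ((intervalIntegrable_iff_integrableOn_Icc_of_le hab).1 hfi) (.of_forall hf)]

theorem pi_withDensity_setOf_add_mem_Icc {ι : Type*} [Fintype ι] {f : ι → ℝ → ℝ} {a b : ι → ℝ}
    (hf : ∀ i x, 0 ≤ f i x) (hfi : ∀ i p q, IntervalIntegrable (f i) volume p q)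
    (hab : ∀ i, a i ≤ b i) (s : ι → ℝ) :
    Measure.pi (fun i => volume.withDensity fun x => ENNReal.ofReal (f i x))
        {y | ∀ i, s i + y i ∈ Set.Icc (a i) (b i)} =
      ENNReal.ofReal (∏ i, landingMass (f i) (a i) (b i) (s i)) := by
  have box : {y : ι → ℝ | ∀ i, s i + y i ∈ Set.Icc (a i) (b i)} =
      Set.univ.pi fun i => Set.Icc (a i - s i) (b i - s i) := by
    ext y
    simp only [Set.mem_ofPred_eq, Set.mem_univ_pi, Set.mem_Icc, sub_le_iff_le_add',
      le_sub_iff_add_le']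
  rw [box, Measure.pi_pi,
    ENNReal.ofReal_prod_of_nonneg fun i _ => landingMass_nonneg (hf i) (hab i) _]
  refine Finset.prod_congr rfl fun i _ => ?_
  rw [withDensity_ofReal_Icc (hf i) (sub_le_sub_right (hab i) _) (hfi i _ _),
    landingMass_eq_integral]

end LandingMass

theorem upper_transition_bound_general {ι : Type*} [Fintype ι]
    (f : ι → ℝ → ℝ) (c a b lo hi : ι → ℝ)
    (hf_nonneg : ∀ i x, 0 ≤ f i x)
    (hf : ∀ i, IsSymmUnimodal (f i) (c i))
    (hab : ∀ i, a i ≤ b i) (hr : ∀ i, lo i ≤ hi i)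
    (μ : Measure (ι → ℝ))
    (hμ : μ = Measure.pi fun i => volume.withDensity fun x => ENNReal.ofReal (f i x))
    (g : ι → ℝ → ℝ)
    (hg : ∀ i s, g i s = ∫ x in (a i)..(b i), f i (x - s))
    (sstar smax : ι → ℝ)
    (hsstar : ∀ i, sstar i = (a i + b i) / 2 - c i)
    (hsmax : ∀ i, smax i =
      if lo i ≤ sstar i ∧ sstar i ≤ hi i then sstar i
      else if hi i < sstar i then hi i else lo i) :
    (∀ s : ι → ℝ, (∀ i, s i ∈ Set.Icc (lo i) (hi i)) →
      μ {y | ∀ i, s i + y i ∈ Set.Icc (a i) (b i)} ≤ ENNReal.ofReal (∏ i, g i (smax i)))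
    ∧ (∀ i, smax i ∈ Set.Icc (lo i) (hi i))
    ∧ μ {y | ∀ i, smax i + y i ∈ Set.Icc (a i) (b i)} =
        ENNReal.ofReal (∏ i, g i (smax i)) := by
  obtain rfl : g = fun i => landingMass (f i) (a i) (b i) := funext₂ hg
  have smax_eq_proj (i) : smax i = Set.projIcc (lo i) (hi i) (hr i) ((a i + b i) / 2 - c i) := by
    rw [hsmax, ite_eq_coe_projIcc (hr i), hsstar]
  have landing_eq_prod (s : ι → ℝ) : μ {y | ∀ i, s i + y i ∈ Set.Icc (a i) (b i)} =
      ENNReal.ofReal (∏ i, landingMass (f i) (a i) (b i) (s i)) :=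
    hμ ▸ pi_withDensity_setOf_add_mem_Icc hf_nonneg (fun i => (hf i).intervalIntegrable) hab s
  refine ⟨fun s hs => ?_, fun i => smax_eq_proj i ▸ Subtype.property _, landing_eq_prod smax⟩
  rw [landing_eq_prod]
  gcongr with i
  · exact fun i _ => landingMass_nonneg (hf_nonneg i) (hab i) _
  · rw [smax_eq_proj]
    exact (hf i).landingMass_le_projIcc (hab i) (hr i) (hs i)

/-- Upper transition-probability bound of Fact 3: for every position `s` in the
shifted reachable rectangle `∏ [ř_i + u_i, r̂_i + u_i]`, the probability that
`s + w` lands in the target rectangle `∏ [a_i, b_i]` is at most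
`∏ g_i (s_{i,max})`, and this bound is attained at `s_max`, which belongs to
the rectangle. -/
theorem upper_transition_bound
    (n : ℕ)
    (f : Fin n → ℝ → ℝ) (c a b rlo rhi u : Fin n → ℝ)
    (hf_nonneg : ∀ i x, 0 ≤ f i x)
    (hf_int : ∀ i, Integrable (f i))
    (hf_prob : ∀ i, ∫ x, f i x = 1)
    (hf_symm : ∀ i t, f i (c i + t) = f i (c i - t))
    (hf_mono : ∀ i, MonotoneOn (f i) (Set.Iic (c i)))
    (hf_anti : ∀ i, AntitoneOn (f i) (Set.Ici (c i)))
    (hab : ∀ i, a i < b i) (hr : ∀ i, rlo i ≤ rhi i)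
    (μ : Measure (Fin n → ℝ))
    (hμ : μ = Measure.pi fun i =>
      (volume : Measure ℝ).withDensity fun x => ENNReal.ofReal (f i x))
    (g : Fin n → ℝ → ℝ)
    (hg : ∀ i s, g i s = ∫ x in (a i)..(b i), f i (x - s))
    (sstar smax : Fin n → ℝ)
    (hsstar : ∀ i, sstar i = (a i + b i) / 2 - c i)
    (hsmax : ∀ i, smax i =
      if rlo i + u i ≤ sstar i ∧ sstar i ≤ rhi i + u i then sstar i
      else if rhi i + u i < sstar i then rhi i + u i else rlo i + u i) :
    (∀ s : Fin n → ℝ, (∀ i, s i ∈ Set.Icc (rlo i + u i) (rhi i + u i)) →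
      μ {y | ∀ i, s i + y i ∈ Set.Icc (a i) (b i)} ≤
        ENNReal.ofReal (∏ i, g i (smax i)))
    ∧ (∀ i, smax i ∈ Set.Icc (rlo i + u i) (rhi i + u i))
    ∧ μ {y | ∀ i, smax i + y i ∈ Set.Icc (a i) (b i)} =
        ENNReal.ofReal (∏ i, g i (smax i)) := by
  exact upper_transition_bound_general f c a b _ _ hf_nonneg (fun i => ⟨hf_symm i, hf_anti i⟩)
    (fun i => (hab i).le) (fun i => by grw [hr i]) μ hμ g hg sstar smax hsstar hsmax
end

section
/- Let p : {1, …, m} → ℝ be monotone nondecreasing (p_k ≤ p_ℓ whenever k ≤ ℓ). Then for every feasible z' one has Σ_{ℓ=1}^m p_ℓ · z_ℓ ≤ Σ_{ℓ=1}^m p_ℓ · z'_ℓ; that is, the greedy assignment z minimizes the expected value Σ_ℓ p_ℓ z'_ℓ over all probability distributions z' respecting the interval bounds. (This is the correctness of the worst-case adversary step of the interval value-iteration algorithm used in the paper's reachability maximization, Section 5.2.) -/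
/-!
Every partial sum of the greedy assignment `z` over an initial segment dominates the corresponding
partial sum of any feasible `w`: at an index where `z` is cut off by the mass budget, all the mass
that `lo` does not reserve for later indices has been spent, so `w` cannot have spent more; at any
other index `z` attains the upper bound `hi`, and the comparison is inherited from the segment
before it. Both assignments have the same total mass, so `z` is stochastically smaller than `w`,
and Abel summation compares the expected values of a monotone `p`.
-/

open Finset

section InitialSegments

variable {ι : Type*} [LinearOrder ι] [LocallyFiniteOrderBot ι]

theorem isLowerSet_finset_induction {motive : Finset ι → Prop} (empty : motive ∅)
    (step : ∀ a, motive (Iio a) → motive (Iic a)) {s : Finset ι}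
    (hs : IsLowerSet (s : Set ι)) : motive s := by
  induction s using Finset.induction_on_max with
  | empty => exact empty
  | insert a s hlt ih =>
    obtain rfl : s = Iio a := by
      ext i
      refine ⟨fun hi ↦ mem_Iio.2 (hlt i hi), fun hi ↦ ?_⟩
      have hia : i < a := mem_Iio.1 hi
      exact mem_of_mem_insert_of_ne (hs hia.le (mem_insert_self a s)) hia.ne
    rw [Iio_insert]
    exact step a (ih (by simpa only [coe_Iio] using isLowerSet_Iio a))

theorem sum_Iic_add_sum_Ioi {M : Type*} [AddCommMonoid M] [Fintype ι] [LocallyFiniteOrderTop ι]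
    (f : ι → M) (a : ι) : ∑ i ∈ Iic a, f i + ∑ i ∈ Ioi a, f i = ∑ i, f i := by
  have hcompl : (Iic a)ᶜ = Ioi a := by ext; simp
  rw [← hcompl, sum_add_sum_compl]

end InitialSegments

section StochasticDominance

variable {ι R : Type*} [LinearOrder ι] [LocallyFiniteOrderBot ι]
  [Ring R] [PartialOrder R] [IsOrderedRing R]

theorem sum_mul_le_mul_sum_of_sum_Iic_nonneg {p d : ι → R} (hp : Monotone p)
    (hd : ∀ a, 0 ≤ ∑ i ∈ Iic a, d i) {s : Finset ι} (hs : IsLowerSet (s : Set ι)) {c : R}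
    (hc : ∀ i ∈ s, p i ≤ c) : ∑ i ∈ s, p i * d i ≤ c * ∑ i ∈ s, d i := by
  refine isLowerSet_finset_induction
    (motive := fun s ↦ ∀ c, (∀ i ∈ s, p i ≤ c) → ∑ i ∈ s, p i * d i ≤ c * ∑ i ∈ s, d i)
    ?empty ?step hs c hc
  case empty => simp
  case step =>
    intro a ih c hc
    calc ∑ i ∈ Iic a, p i * d i
        = ∑ i ∈ Iio a, p i * d i + p a * d a := (sum_Iio_add_eq_sum_Iic a).symm
      _ ≤ p a * ∑ i ∈ Iio a, d i + p a * d a :=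
          add_le_add_left (ih (p a) fun i hi ↦ hp (mem_Iio.1 hi).le) _
      _ = p a * ∑ i ∈ Iic a, d i := by rw [← mul_add, sum_Iio_add_eq_sum_Iic]
      _ ≤ c * ∑ i ∈ Iic a, d i := mul_le_mul_of_nonneg_right (hc a (mem_Iic.2 le_rfl)) (hd a)

theorem sum_mul_le_sum_mul_of_sum_Iic_le [Fintype ι] {p f g : ι → R}
    (hp : Monotone p) (hle : ∀ a, ∑ i ∈ Iic a, g i ≤ ∑ i ∈ Iic a, f i)
    (heq : ∑ i, f i = ∑ i, g i) : ∑ i, p i * f i ≤ ∑ i, p i * g i := by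
  cases isEmpty_or_nonempty ι
  · simp only [univ_eq_empty, sum_empty, le_refl]
  obtain ⟨a, ha⟩ := Finite.exists_max (id : ι → ι)
  have hdiff : ∑ i, p i * (f i - g i) ≤ p a * ∑ i, (f i - g i) :=
    sum_mul_le_mul_sum_of_sum_Iic_nonneg hp
      (fun b ↦ by simpa only [sum_sub_distrib, sub_nonneg] using hle b)
      (by simpa only [coe_univ] using isLowerSet_univ)
      (fun i _ ↦ hp (ha i))
  simpa only [mul_sub, sum_sub_distrib, heq, sub_self, mul_zero, sub_nonpos] using hdiff

end StochasticDominance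

section Greedy

/-- Mass assignments of total mass `c` within the interval bounds `lo` and `hi`. For `c = 1` and
`0 ≤ lo` these are the probability distributions allowed by a row of an interval Markov chain. -/
structure IsFeasibleAssignment {ι M : Type*} [Fintype ι] [AddCommMonoid M] [LE M]
    (lo hi : ι → M) (c : M) (w : ι → M) : Prop where
  lower_le : ∀ i, lo i ≤ w i
  le_upper : ∀ i, w i ≤ hi i
  sum_eq : ∑ i, w i = c

variable {ι M : Type*} [LinearOrder ι] [LocallyFiniteOrderBot ι] [LocallyFiniteOrderTop ι]
  [AddCommGroup M] [LinearOrder M]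

/-- The greedy assignment of the total mass `c`: each index in turn receives as much as its upper
bound allows, after reserving the lower bounds of all later indices. The recursion is encoded as
the family of equations that it satisfies. -/
def IsGreedyAssignment (lo hi : ι → M) (c : M) (z : ι → M) : Prop :=
  ∀ a, z a = min (hi a) (c - ∑ i ∈ Iio a, z i - ∑ i ∈ Ioi a, lo i)

namespace IsGreedyAssignment

variable {lo hi z w : ι → M} {c : M}

theorem eq_upper_or_sum_Iic_add_sum_Ioi_eq (hz : IsGreedyAssignment lo hi c z) (a : ι) :
    z a = hi a ∨ ∑ i ∈ Iic a, z i + ∑ i ∈ Ioi a, lo i = c := by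
  refine (min_choice (hi a) (c - ∑ i ∈ Iio a, z i - ∑ i ∈ Ioi a, lo i)).imp (hz a).trans
    fun hmin ↦ ?_
  rw [← sum_Iio_add_eq_sum_Iic, (hz a).trans hmin]
  abel

variable [IsOrderedAddMonoid M]

theorem sum_Iic_add_sum_Ioi_le (hz : IsGreedyAssignment lo hi c z) (a : ι) :
    ∑ i ∈ Iic a, z i + ∑ i ∈ Ioi a, lo i ≤ c := by
  have hza : z a ≤ c - ∑ i ∈ Iio a, z i - ∑ i ∈ Ioi a, lo i := (hz a).trans_le (min_le_right _ _)
  rwa [le_sub_iff_add_le, le_sub_iff_add_le', ← add_assoc, sum_Iio_add_eq_sum_Iic] at hza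

variable [Fintype ι]

theorem sum_le_sum_of_isLowerSet (hz : IsGreedyAssignment lo hi c z)
    (hw : IsFeasibleAssignment lo hi c w) {s : Finset ι} (hs : IsLowerSet (s : Set ι)) :
    ∑ i ∈ s, w i ≤ ∑ i ∈ s, z i := by
  refine isLowerSet_finset_induction (motive := fun s ↦ ∑ i ∈ s, w i ≤ ∑ i ∈ s, z i)
    ?empty ?step hs
  case empty => simp
  case step =>
    intro a ih
    obtain hza | hza := hz.eq_upper_or_sum_Iic_add_sum_Ioi_eq a
    · rw [← sum_Iio_add_eq_sum_Iic, ← sum_Iio_add_eq_sum_Iic, hza]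
      exact add_le_add ih (hw.le_upper a)
    · refine le_of_add_le_add_right (a := ∑ i ∈ Ioi a, lo i) ?_
      calc ∑ i ∈ Iic a, w i + ∑ i ∈ Ioi a, lo i
          ≤ ∑ i ∈ Iic a, w i + ∑ i ∈ Ioi a, w i := by gcongr with i; exact hw.lower_le i
        _ = c := by rw [sum_Iic_add_sum_Ioi, hw.sum_eq]
        _ = ∑ i ∈ Iic a, z i + ∑ i ∈ Ioi a, lo i := hza.symm

theorem sum_le [Nonempty ι] (hz : IsGreedyAssignment lo hi c z) : ∑ i, z i ≤ c := by
  obtain ⟨a, ha⟩ := Finite.exists_max (id : ι → ι)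
  have hIoi : Ioi a = ∅ := Ioi_eq_empty.2 fun i _ ↦ ha i
  simpa only [← sum_Iic_add_sum_Ioi z a, hIoi, sum_empty] using hz.sum_Iic_add_sum_Ioi_le a

theorem sum_eq_sum (hz : IsGreedyAssignment lo hi c z) (hw : IsFeasibleAssignment lo hi c w) :
    ∑ i, z i = ∑ i, w i := by
  cases isEmpty_or_nonempty ι
  · simp only [univ_eq_empty, sum_empty]
  · refine le_antisymm (hz.sum_le.trans_eq hw.sum_eq.symm) (hz.sum_le_sum_of_isLowerSet hw ?_)
    simpa only [coe_univ] using isLowerSet_univ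

end IsGreedyAssignment

end Greedy

theorem greedy_assignment_minimizes_general {ι R : Type*} [LinearOrder ι] [Fintype ι]
    [LocallyFiniteOrderBot ι] [LocallyFiniteOrderTop ι] [Ring R] [LinearOrder R] [IsOrderedRing R]
    {lo hi z w p : ι → R} {c : R} (hz : IsGreedyAssignment lo hi c z)
    (hw : IsFeasibleAssignment lo hi c w) (hp : Monotone p) :
    ∑ i, p i * z i ≤ ∑ i, p i * w i := by
  refine sum_mul_le_sum_mul_of_sum_Iic_le hp (fun a ↦ ?_) (hz.sum_eq_sum hw)
  exact hz.sum_le_sum_of_isLowerSet hw (by simpa only [coe_Iic] using isLowerSet_Iic a)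

/-- Correctness of the worst-case adversary step of interval value iteration:
for `p` monotone nondecreasing, the greedy assignment `z` minimizes the
expected value `∑ ℓ, p ℓ * z' ℓ` over all feasible distributions `z'`. -/
theorem greedy_assignment_minimizes
    (m : ℕ) (hm : 1 ≤ m)
    (Tlo Thi : Fin m → ℝ)
    (h0 : ∀ ℓ, 0 ≤ Tlo ℓ) (hle : ∀ ℓ, Tlo ℓ ≤ Thi ℓ)
    (hsumlo : ∑ ℓ, Tlo ℓ ≤ 1) (hsumhi : 1 ≤ ∑ ℓ, Thi ℓ)
    (z : Fin m → ℝ)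
    (hz : ∀ ℓ, z ℓ = min (Thi ℓ)
      (1 - ∑ k ∈ Finset.Iio ℓ, z k - ∑ k ∈ Finset.Ioi ℓ, Tlo k))
    (p : Fin m → ℝ) (hp : Monotone p) :
    ∀ z' : Fin m → ℝ, (∀ ℓ, Tlo ℓ ≤ z' ℓ ∧ z' ℓ ≤ Thi ℓ) → ∑ ℓ, z' ℓ = 1 →
      ∑ ℓ, p ℓ * z ℓ ≤ ∑ ℓ, p ℓ * z' ℓ :=
  fun _ hbounds hsum ↦ greedy_assignment_minimizes_general (lo := Tlo) (hi := Thi) hz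
    ⟨fun ℓ ↦ (hbounds ℓ).1, fun ℓ ↦ (hbounds ℓ).2, hsum⟩ hp
end
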